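/- Let S = (G, 9, k, τ) be a realizable graph story where G is a nested triangles graph on n = 3h vertices (h ≥ 3) and τ is given by the indices of the vertices of G. Then any realization of S requires k ∈ Ω(n) extra points. -/

import Mathlib

open Set

namespace GraphStories

/-- Points of the plane. -/
abbrev Pt : Type := ℝ × ℝ

/-- The vertex set of the window graph `G_i` (time `i` is 1-indexed, vertex
`v_j : Fin n` sits at position `j+1` in the ordering `τ`):
`v_j ∈ G_i` iff `max{1, i-ω+1} ≤ j+1 ≤ i`. -/
def window (n ω i : ℕ) : Set (Fin n) := {j | j.val + 1 ≤ i ∧ i ≤ j.val + ω}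

/-- All edges of `G` are visible: `|i - j| < ω` for every edge `(v_i, v_j)`. -/
def Visible (n ω : ℕ) (G : SimpleGraph (Fin n)) : Prop :=
  ∀ u v : Fin n, G.Adj u v → u.val < v.val + ω ∧ v.val < u.val + ω

/-- The data of a drawing: a position for every vertex, and a parametrized curve
for every (ordered) pair of vertices (only the data attached to the vertices and
edges of the relevant subgraph is meaningful). -/
structure RawDrawing (n : ℕ) where
  pos : Fin n → Pt
  curve : Fin n → Fin n → ℝ → Pt

/-- `γ` (restricted to `[0,1]`) is a Jordan arc from `a` to `b`. -/
def IsArcFrom (γ : ℝ → Pt) (a b : Pt) : Prop :=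
  ContinuousOn γ (Icc 0 1) ∧ InjOn γ (Icc 0 1) ∧ γ 0 = a ∧ γ 1 = b

/-- The set of points of an arc. -/
def arcBody (γ : ℝ → Pt) : Set Pt := γ '' Icc (0 : ℝ) 1

/-- The set of interior points of an arc (endpoints removed). -/
def arcInterior (γ : ℝ → Pt) : Set Pt := γ '' Ioo (0 : ℝ) 1

/-- `D` is a planar drawing of the subgraph of `G` induced by `S`, with the
vertices mapped to (distinct) points of `P` and the edges drawn as Jordan arcs
which pairwise do not intersect except at common endpoints. -/
structure IsPlanarDrawingOn (n : ℕ) (G : SimpleGraph (Fin n)) (S : Set (Fin n))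
    (P : Set Pt) (D : RawDrawing n) : Prop where
  pos_mem : ∀ v ∈ S, D.pos v ∈ P
  pos_inj : InjOn D.pos S
  curve_symm : ∀ u v : Fin n, D.curve v u = fun t => D.curve u v (1 - t)
  arc : ∀ u ∈ S, ∀ v ∈ S, G.Adj u v → IsArcFrom (D.curve u v) (D.pos u) (D.pos v)
  vertex_off_arc : ∀ u ∈ S, ∀ v ∈ S, G.Adj u v → ∀ w ∈ S,
      D.pos w ∉ arcInterior (D.curve u v)
  no_cross : ∀ u ∈ S, ∀ v ∈ S, ∀ x ∈ S, ∀ y ∈ S, G.Adj u v → G.Adj x y →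
      s(u, v) ≠ s(x, y) →
      arcInterior (D.curve u v) ∩ arcInterior (D.curve x y) = ∅

/-- `D` is a planar drawing of the subgraph of `G` induced by `S` (anywhere in
the plane). -/
def IsPlanarDrawing (n : ℕ) (G : SimpleGraph (Fin n)) (S : Set (Fin n))
    (D : RawDrawing n) : Prop :=
  IsPlanarDrawingOn n G S univ D

/-- A realization of the graph story `(G, ω, k, τ)` on the point set `P`:
a sequence `Γ_1, …, Γ_n` of planar drawings of the window graphs `G_1, …, G_n`
on `P` (property R1) such that consecutive drawings restrict identically
(vertex positions and edge arcs) to the common subgraph `G_{i-1} ∩ G_i`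
(property R2). -/
structure Realization (n ω : ℕ) (G : SimpleGraph (Fin n)) (P : Set Pt) where
  Γ : ℕ → RawDrawing n
  planar : ∀ i, 1 ≤ i → i ≤ n → IsPlanarDrawingOn n G (window n ω i) P (Γ i)
  pos_eq : ∀ i, 2 ≤ i → i ≤ n → ∀ v ∈ window n ω (i - 1) ∩ window n ω i,
      (Γ i).pos v = (Γ (i - 1)).pos v
  curve_eq : ∀ i, 2 ≤ i → i ≤ n →
      ∀ u ∈ window n ω (i - 1) ∩ window n ω i,
      ∀ v ∈ window n ω (i - 1) ∩ window n ω i,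
      G.Adj u v → (Γ i).curve u v = (Γ (i - 1)).curve u v

/-- The story `(G, ω, k, τ)` admits a realization on the point set `P`. -/
def RealizableOn (n ω : ℕ) (G : SimpleGraph (Fin n)) (P : Set Pt) : Prop :=
  Nonempty (Realization n ω G P)

/-- The story `(G, ω, k, τ)` is realizable: it admits a realization on some set
of `ω + k` points. -/
def Realizable (n ω k : ℕ) (G : SimpleGraph (Fin n)) : Prop :=
  ∃ P : Finset Pt, P.card = ω + k ∧ RealizableOn n ω G ↑P

/-- The `n`-vertex nested triangles graph (`n = 3h`): it contains the vertices
and edges of the triangles `(v_{3m}, v_{3m+1}, v_{3m+2})` (vertices with equal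
`⌊·/3⌋`), plus the edges `(v_i, v_{i+3})`. -/
def nestedTriangles (h : ℕ) : SimpleGraph (Fin (3 * h)) :=
  SimpleGraph.fromRel fun a b => a.val / 3 = b.val / 3 ∨ a.val + 3 = b.val

/-!
In a plane drawing the middle one of three consecutive triangles separates the inner from the outer
one, so that the compact connected sets occupied by the triangles are locally nested: no triangle
has both of its neighbours in its exterior. Hence the sequence of triangles first grows outwards and
then grows inwards, and since enclosure is transitive, each of the two parts consists of pairwise
disjoint sets, even though its triangles are not all visible at the same time. So a point of `P`
is used by at most two of the `3 h` vertices.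

The separation is the uniqueness of the plane embedding of `K₅` minus an edge. It is proved by
counting windings: for poles `a`, `b` joined by disjoint spokes to the vertices of a triangle, the
windings of the triangle around `a` and `b` differ by `2 w` for a number `w` with `exp w = -1`,
whereas they would agree if `a` and `b` were joined by a path avoiding the triangle.
-/

section LogVariation

open unitInterval

variable {a b c d p : ℂ}

theorem exists_continuous_exp_eq {X : Type*} [TopologicalSpace X] [SimplyConnectedSpace X]
    [LocallyPathConnectedSpace X] {f : X → ℂ} (hf : Continuous f) (hf₀ : ∀ x, f x ≠ 0) :
    ∃ L : X → ℂ, Continuous L ∧ ∀ x, Complex.exp (L x) = f x := by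
  obtain ⟨x₀⟩ : Nonempty X := inferInstance
  obtain ⟨L, ⟨-, hL⟩, -⟩ := Complex.isCoveringMapOn_exp.existsUnique_continuousMap_lifts
    (⟨f, hf⟩ : C(X, ℂ)) (a₀ := x₀) (e₀ := Complex.log (f x₀)) (Complex.exp_log (hf₀ x₀))
    fun x ↦ by simpa using hf₀ x
  exact ⟨L, L.continuous, congrFun hL⟩

theorem sub_eq_sub_of_exp_eq {X : Type*} [TopologicalSpace X] [PreconnectedSpace X]
    {L M : X → ℂ} (hL : Continuous L) (hM : Continuous M)
    (h : ∀ x, Complex.exp (L x) = Complex.exp (M x)) (x y : X) : L x - L y = M x - M y := by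
  have hshift : L = fun z ↦ M z + (L y - M y) := by
    refine Complex.isCoveringMap_exp.eq_of_comp_eq hL (by fun_prop) ?_ y (by ring)
    funext z
    simp [Complex.exp_add, Complex.exp_sub, h]
  rw [congrFun hshift x]
  ring

open Classical in
/-- The total variation `log (b - p) - log (a - p)` of a continuous branch of `log (z - p)` as `z`
runs along `γ` from `a` to `b`. It has the junk value `0` if `γ` passes through `p`. For a loop it
is `2πi` times the winding number around `p`. -/
noncomputable def logVariation (γ : Path a b) (p : ℂ) : ℂ :=
  if h : ∃ L : I → ℂ, Continuous L ∧ ∀ t, Complex.exp (L t) = γ t - p then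
    h.choose 1 - h.choose 0
  else 0

theorem logVariation_eq {γ : Path a b} {L : I → ℂ} (hL : Continuous L)
    (hexp : ∀ t, Complex.exp (L t) = γ t - p) : logVariation γ p = L 1 - L 0 := by
  have hex : ∃ L : I → ℂ, Continuous L ∧ ∀ t, Complex.exp (L t) = γ t - p := ⟨L, hL, hexp⟩
  rw [logVariation, dif_pos hex]
  exact sub_eq_sub_of_exp_eq hex.choose_spec.1 hL
    (fun t ↦ (hex.choose_spec.2 t).trans (hexp t).symm) 1 0

theorem exp_logVariation {γ : Path a b} (hp : p ∉ range γ) :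
    Complex.exp (logVariation γ p) = (b - p) / (a - p) := by
  obtain ⟨L, hL, hexp⟩ := exists_continuous_exp_eq (f := fun t : ℝ ↦ γ.extend t - p)
    (by fun_prop) fun t ↦ sub_ne_zero.2 fun h ↦ hp ⟨_, h⟩
  rw [logVariation_eq (L := fun t : I ↦ L t) (by fun_prop) fun t ↦ by simp [hexp]]
  simp [Complex.exp_sub, hexp]

/-- A logarithm of `γ s - δ t` exists on the whole parameter square; the two sides are its
variations along the two ways from `(0, 0)` to `(1, 1)`. -/
theorem logVariation_add_logVariation_of_disjoint {γ : Path a b} {δ : Path c d}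
    (h : Disjoint (range γ) (range δ)) :
    logVariation γ c + logVariation δ b = logVariation δ a + logVariation γ d := by
  obtain ⟨L, hL, hexp⟩ := exists_continuous_exp_eq
    (f := fun x : ℝ × ℝ ↦ γ.extend x.1 - δ.extend x.2) (by fun_prop)
    fun x ↦ sub_ne_zero.2 fun heq ↦ disjoint_left.1 h ⟨_, rfl⟩ ⟨_, heq.symm⟩
  have hγc : logVariation γ c = L (1, 0) - L (0, 0) :=
    logVariation_eq (L := fun t : I ↦ L (t, 0)) (by fun_prop) fun t ↦ by simp [hexp]
  have hγd : logVariation γ d = L (1, 1) - L (0, 1) :=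
    logVariation_eq (L := fun t : I ↦ L (t, 1)) (by fun_prop) fun t ↦ by simp [hexp]
  -- `δ t - γ s = exp (πi) * (γ s - δ t)`
  have hδb : logVariation δ b = L (1, 1) - L (1, 0) := by
    rw [logVariation_eq (L := fun t : I ↦ L (1, t) + Real.pi * Complex.I) (by fun_prop)
      fun t ↦ by simp [Complex.exp_add, hexp]]
    simp
  have hδa : logVariation δ a = L (0, 1) - L (0, 0) := by
    rw [logVariation_eq (L := fun t : I ↦ L (0, t) + Real.pi * Complex.I) (by fun_prop)
      fun t ↦ by simp [Complex.exp_add, hexp]]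
    simp
  rw [hγc, hγd, hδa, hδb]
  ring

theorem sum_logVariation_eq_of_joinedIn {ι : Type*} [Fintype ι] (f : Equiv.Perm ι) {x : ι → ℂ}
    (e : ∀ i, Path (x i) (x (f i))) (h : JoinedIn (⋃ i, range (e i))ᶜ a b) :
    ∑ i, logVariation (e i) a = ∑ i, logVariation (e i) b := by
  obtain ⟨δ, hδ⟩ := h
  have hdisj (i : ι) : Disjoint (range (e i)) (range δ) :=
    disjoint_left.2 fun z hz ⟨t, ht⟩ ↦ hδ t (ht ▸ mem_iUnion_of_mem i hz)
  have hcomm : ∑ i, (logVariation (e i) a + logVariation δ (x (f i)))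
      = ∑ i, (logVariation δ (x i) + logVariation (e i) b) :=
    Finset.sum_congr rfl fun i _ ↦ logVariation_add_logVariation_of_disjoint (hdisj i)
  rw [Finset.sum_add_distrib, Finset.sum_add_distrib,
    Equiv.sum_comp f fun i ↦ logVariation δ (x i)] at hcomm
  linear_combination hcomm

/-- The sum over `k` of the variation of `log (z - x (k + 1))` along `a → x k → b`, corrected by
the variations along the spokes `s k`, `t k` around their opposite poles `b`, `a`. For disjointly
drawn spokes its exponential is `-1`, and twice its value is the difference between the windings
of the triangle `x 0, x 1, x 2` around `a` and `b`. -/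
noncomputable def spokeDefect {x : Fin 3 → ℂ} (s : ∀ i, Path a (x i)) (t : ∀ i, Path (x i) b) : ℂ :=
  ∑ k, (logVariation (s k) (x (k + 1)) + logVariation (t k) (x (k + 1))
    - (logVariation (s k) b + logVariation (t k) a))

section Spokes

variable {x : Fin 3 → ℂ} {s : ∀ i, Path a (x i)} {t : ∀ i, Path (x i) b}

theorem exp_spokeDefect (hst : ∀ i j, i ≠ j → Disjoint (range (s i)) (range (t j))) :
    Complex.exp (spokeDefect s t) = -1 := by
  have hne (k : Fin 3) : k ≠ k + 1 ∧ k + 1 ≠ k := by decide +revert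
  have hab : a - b ≠ 0 :=
    sub_ne_zero.2 ((hst 0 1 (hne 0).1).ne_of_mem (s 0).source_mem_range (t 1).target_mem_range)
  have hax (k : Fin 3) : a - x k ≠ 0 := sub_ne_zero.2 <|
    (hst (k + 1) k (hne k).2).ne_of_mem (s (k + 1)).source_mem_range (t k).source_mem_range
  have hbx (k : Fin 3) : b - x k ≠ 0 := sub_ne_zero.2 <| Ne.symm <|
    (hst k (k + 1) (hne k).1).ne_of_mem (s k).target_mem_range (t (k + 1)).target_mem_range
  have hxx (k : Fin 3) : x k - x (k + 1) ≠ 0 := sub_ne_zero.2 <|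
    (hst k (k + 1) (hne k).1).ne_of_mem (s k).target_mem_range (t (k + 1)).source_mem_range
  set r : Fin 3 → ℂ := fun k ↦ (b - x k) / (a - x k) with hr
  have hterm (k : Fin 3) : Complex.exp (logVariation (s k) (x (k + 1))
      + logVariation (t k) (x (k + 1)) - (logVariation (s k) b + logVariation (t k) a))
      = -(r (k + 1) / r k) := by
    rw [Complex.exp_sub, Complex.exp_add, Complex.exp_add,
      exp_logVariation ((hst k (k + 1) (hne k).1).notMem_of_mem_right (t _).source_mem_range),
      exp_logVariation ((hst (k + 1) k (hne k).2).notMem_of_mem_left (s _).target_mem_range),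
      exp_logVariation ((hst k (k + 1) (hne k).1).notMem_of_mem_right (t _).target_mem_range),
      exp_logVariation ((hst (k + 1) k (hne k).2).notMem_of_mem_left (s _).source_mem_range)]
    have := hax k; have := hax (k + 1); have := hbx k; have := hxx k
    rw [← neg_sub b (x k), ← neg_sub a (x k), ← neg_sub a b]
    simp only [hr]
    field_simp
  calc Complex.exp (spokeDefect s t)
      = ∏ k, -(r (k + 1) / r k) := by rw [spokeDefect, Complex.exp_sum]; simp only [hterm]
    _ = (-1) ^ 3 * ((∏ k, r (k + 1)) / ∏ k, r k) := by
      rw [Finset.prod_neg, Finset.prod_div_distrib]; simp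
    _ = -1 := by
      rw [show ∏ k, r (k + 1) = ∏ k, r k from Equiv.prod_comp (Equiv.addRight 1) r,
        div_self (Finset.prod_ne_zero_iff.2 fun k _ ↦ div_ne_zero (hbx k) (hax k))]
      norm_num

theorem sum_logVariation_sub_sum_logVariation {e : ∀ i, Path (x i) (x (i + 1))}
    (hst : ∀ i j, i ≠ j → Disjoint (range (s i)) (range (t j)))
    (hse : ∀ i j, i ≠ j → i ≠ j + 1 → Disjoint (range (s i)) (range (e j)))
    (hte : ∀ i j, i ≠ j → i ≠ j + 1 → Disjoint (range (t i)) (range (e j))) :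
    ∑ i, logVariation (e i) a - ∑ i, logVariation (e i) b = 2 * spokeDefect s t := by
  have hST (i j) (h) := logVariation_add_logVariation_of_disjoint (hst i j h)
  have hSE (i j) (h h') := logVariation_add_logVariation_of_disjoint (hse i j h h')
  have hTE (i j) (h h') := logVariation_add_logVariation_of_disjoint (hte i j h h')
  rw [spokeDefect, Fin.sum_univ_three, Fin.sum_univ_three, Fin.sum_univ_three]
  linear_combination (norm := (simp only [Fin.isValue, Fin.reduceAdd, zero_add]; ring))
    -(hST 0 1 (by decide) + hST 1 2 (by decide) + hST 2 0 (by decide)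
      + hST 1 0 (by decide) + hST 2 1 (by decide) + hST 0 2 (by decide)
      + hSE 0 1 (by decide) (by decide) + hSE 1 2 (by decide) (by decide)
      + hSE 2 0 (by decide) (by decide) + hTE 0 1 (by decide) (by decide)
      + hTE 1 2 (by decide) (by decide) + hTE 2 0 (by decide) (by decide))

/-- Otherwise the windings of the triangle around `a` and `b` agree, so that the spoke defect is `0`
and its exponential `1`. -/
theorem not_joinedIn_compl_iUnion_range {e : ∀ i, Path (x i) (x (i + 1))}
    (hst : ∀ i j, i ≠ j → Disjoint (range (s i)) (range (t j)))
    (hse : ∀ i j, i ≠ j → i ≠ j + 1 → Disjoint (range (s i)) (range (e j)))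
    (hte : ∀ i j, i ≠ j → i ≠ j + 1 → Disjoint (range (t i)) (range (e j))) :
    ¬ JoinedIn (⋃ i, range (e i))ᶜ a b := by
  intro h
  have hsum : ∑ i, logVariation (e i) a = ∑ i, logVariation (e i) b :=
    sum_logVariation_eq_of_joinedIn (Equiv.addRight 1) e h
  have hdefect : spokeDefect s t = 0 := by
    linear_combination (hsum - sum_logVariation_sub_sum_logVariation hst hse hte) / 2
  have hexp := exp_spokeDefect hst
  rw [hdefect, Complex.exp_zero] at hexp
  norm_num at hexp

end Spokes
end LogVariation

theorem not_joinedIn_compl_iUnion {X : Type*} [TopologicalSpace X] (φ : X ≃ₜ ℂ) {a b : X}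
    {x : Fin 3 → X} {S T E : Fin 3 → Set X} (hS : ∀ i, JoinedIn (S i) a (x i))
    (hT : ∀ i, JoinedIn (T i) (x i) b) (hE : ∀ i, JoinedIn (E i) (x i) (x (i + 1)))
    (hST : ∀ i j, i ≠ j → Disjoint (S i) (T j))
    (hSE : ∀ i j, i ≠ j → i ≠ j + 1 → Disjoint (S i) (E j))
    (hTE : ∀ i j, i ≠ j → i ≠ j + 1 → Disjoint (T i) (E j)) :
    ¬ JoinedIn (⋃ i, E i)ᶜ a b := by
  have exists_path {F : Set X} {p q : X} (h : JoinedIn F p q) :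
      ∃ γ : Path (φ p) (φ q), range γ ⊆ φ '' F :=
    ⟨h.somePath.map φ.continuous, by
      rintro _ ⟨t, rfl⟩
      exact mem_image_of_mem φ (h.somePath_mem t)⟩
  choose s hs using fun i ↦ exists_path (hS i)
  choose t ht using fun i ↦ exists_path (hT i)
  choose e he using fun i ↦ exists_path (hE i)
  have disjoint_image {A B : Set X} (h : Disjoint A B) : Disjoint (φ '' A) (φ '' B) :=
    (disjoint_image_iff φ.injective).2 h
  intro h
  refine not_joinedIn_compl_iUnion_range (s := s) (t := t) (e := e)
    (fun i j hij ↦ (disjoint_image (hST i j hij)).mono (hs i) (ht j))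
    (fun i j hij hij' ↦ (disjoint_image (hSE i j hij hij')).mono (hs i) (he j))
    (fun i j hij hij' ↦ (disjoint_image (hTE i j hij hij')).mono (ht i) (he j)) ?_
  refine (h.map φ.continuous).mono ?_
  rw [image_compl_eq φ.bijective, image_iUnion]
  exact compl_subset_compl.2 (iUnion_mono he)

section Exterior

open Bornology Filter Topology

section TopologicalSpace

variable {X : Type*} [TopologicalSpace X] [Bornology X] {B C D : Set X} {p q : X}

/-- The points that can be joined in the complement of `C` to all points far away. For compact `C`
in the plane this is the unbounded face of `C`. -/
def exterior (C : Set X) : Set X := {p | ∀ᶠ q in cobounded X, JoinedIn Cᶜ p q}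

theorem mem_exterior_of_joinedIn (h : JoinedIn Cᶜ p q) (hq : q ∈ exterior C) : p ∈ exterior C :=
  hq.mono fun _ ↦ h.trans

theorem exterior_subset_exterior (h : Disjoint (exterior C) D) : exterior C ⊆ exterior D := by
  refine fun p hp ↦ hp.mono fun q ⟨γ, hγ⟩ ↦ ⟨γ, fun t ↦ ?_⟩
  have hrange : IsPathConnected (range γ) :=
    γ.extend_range ▸ isPathConnected_range γ.continuous_extend
  have hpt : JoinedIn Cᶜ p (γ t) :=
    (hrange.joinedIn p γ.source_mem_range _ (mem_range_self t)).mono (range_subset_iff.2 hγ)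
  exact disjoint_left.1 h (mem_exterior_of_joinedIn hpt.symm hp)

theorem subset_exterior_or_disjoint_exterior (hD : IsPathConnected D) (hCD : Disjoint C D) :
    D ⊆ exterior C ∨ Disjoint (exterior C) D := by
  refine or_iff_not_imp_right.2 fun h q hq ↦ ?_
  obtain ⟨p, hpC, hpD⟩ := not_disjoint_iff.1 h
  exact mem_exterior_of_joinedIn
    ((hD.joinedIn q hq p hpD).mono (subset_compl_iff_disjoint_left.2 hCD)) hpC

theorem closure_exterior_subset [LocallyPathConnectedSpace X] (hC : IsClosed C) :
    closure (exterior C) ⊆ exterior C ∪ C := by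
  refine fun p hp ↦ or_iff_not_imp_right.2 fun hpC ↦ ?_
  obtain ⟨q, hpq, hq⟩ :=
    mem_closure_iff_nhds.1 hp _ (pathComponentIn_mem_nhds (hC.isOpen_compl.mem_nhds hpC))
  exact mem_exterior_of_joinedIn hpq hq

/-- `C` encloses `D` if `D` avoids the exterior of `C` and `C` lies in the exterior of `D`: for
disjoint connected compact sets in the plane, `D` lies in a bounded face of `C`. -/
def Encloses (C D : Set X) : Prop := Disjoint (exterior C) D ∧ C ⊆ exterior D

instance : IsTrans (Set X) Encloses where
  trans _ _ _ hBC hCD :=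
    ⟨hCD.1.mono_left (exterior_subset_exterior hBC.1),
      hBC.2.trans (exterior_subset_exterior hCD.1)⟩

variable [(cobounded X).NeBot]

theorem exterior_subset_compl : exterior C ⊆ Cᶜ := fun _ hp ↦
  hp.exists.elim fun _ h ↦ h.source_mem

theorem joinedIn_of_mem_exterior (hp : p ∈ exterior C) (hq : q ∈ exterior C) : JoinedIn Cᶜ p q :=
  (hp.and hq).exists.elim fun _ h ↦ h.1.trans h.2.symm

theorem Encloses.disjoint (h : Encloses C D) : Disjoint C D :=
  disjoint_left.2 fun _ hp ↦ exterior_subset_compl (h.2 hp)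

variable [LocallyPathConnectedSpace X]

theorem isOpen_exterior (hC : IsClosed C) : IsOpen (exterior C) := by
  refine isOpen_iff_mem_nhds.2 fun p hp ↦ ?_
  filter_upwards [pathComponentIn_mem_nhds (hC.isOpen_compl.mem_nhds (exterior_subset_compl hp))]
    with q hq
  exact mem_exterior_of_joinedIn hq.symm hp

/-- Otherwise `C` and `D` have the same exterior, which is clopen. -/
theorem not_disjoint_exterior_of_disjoint_exterior [PreconnectedSpace X] (hC : IsClosed C)
    (hD : IsClosed D) (hne : C.Nonempty) (hext : (exterior C).Nonempty) (hCD : Disjoint C D)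
    (h : Disjoint (exterior C) D) : ¬ Disjoint (exterior D) C := by
  intro h'
  have heq : exterior C = exterior D :=
    (exterior_subset_exterior h).antisymm (exterior_subset_exterior h')
  have hclosed : IsClosed (exterior C) := by
    refine closure_subset_iff_isClosed.1 fun p hp ↦ ?_
    have hpC := closure_exterior_subset hC hp
    have hpD := closure_exterior_subset hD (heq ▸ hp)
    exact hpC.elim id fun hC ↦ hpD.elim (heq ▸ ·) fun hD ↦ (disjoint_left.1 hCD hC hD).elim
  have huniv : exterior C = univ := IsClopen.eq_univ ⟨hclosed, isOpen_exterior hC⟩ hext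
  obtain ⟨p, hp⟩ := hne
  exact exterior_subset_compl (huniv ▸ mem_univ p) hp

end TopologicalSpace

section NormedSpace

variable {E : Type*} [NormedAddCommGroup E] [NormedSpace ℝ E] {C D : Set E}

theorem isPathConnected_setOf_lt_norm (h : 1 < Module.rank ℝ E) {r : ℝ} (hr : 0 ≤ r) :
    IsPathConnected {x : E | r < ‖x‖} := by
  have himage : {x : E | r < ‖x‖} = (fun x : ℝ × E ↦ x.1 • x.2) '' Ioi r ×ˢ Metric.sphere 0 1 := by
    ext x
    constructor
    · intro (hx : r < ‖x‖)
      have hx₀ : ‖x‖ ≠ 0 := (hr.trans_lt hx).ne'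
      exact ⟨(‖x‖, ‖x‖⁻¹ • x), by simp [hx, norm_smul, hx₀], by simp [smul_smul, hx₀]⟩
    · rintro ⟨⟨s, y⟩, ⟨hs, hy⟩, rfl⟩
      simpa [norm_smul, mem_sphere_zero_iff_norm.1 hy] using lt_abs.2 (.inl hs)
  rw [himage]
  exact (((convex_Ioi r).isPathConnected nonempty_Ioi).prod
    (isPathConnected_sphere h 0 zero_le_one)).image (by fun_prop)

theorem exterior_nonempty (h : 1 < Module.rank ℝ E) (hC : IsBounded C) :
    (exterior C).Nonempty := by
  obtain ⟨r, hr, hCr⟩ := hC.exists_pos_norm_le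
  obtain ⟨p, hp⟩ := (isPathConnected_setOf_lt_norm h hr.le).nonempty
  refine ⟨p, (eventually_cobounded_le_norm (r + 1)).mono fun q hq ↦ ?_⟩
  exact ((isPathConnected_setOf_lt_norm h hr.le).joinedIn p hp q (by grind)).mono
    fun x hx hxC ↦ (hCr x hxC).not_gt hx

theorem encloses_of_disjoint_exterior (h : 1 < Module.rank ℝ E) (hC : IsCompact C)
    (hC' : IsPathConnected C) (hD : IsClosed D) (hCD : Disjoint C D)
    (hd : Disjoint (exterior C) D) : Encloses C D := by
  have : Nontrivial E := (rank_pos_iff_nontrivial (R := ℝ)).1 (zero_lt_one.trans h)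
  exact ⟨hd, (subset_exterior_or_disjoint_exterior hC' hCD.symm).resolve_right <|
    not_disjoint_exterior_of_disjoint_exterior hC.isClosed hD hC'.nonempty
      (exterior_nonempty h hC.isBounded) hCD hd⟩

section Sequence

variable {C : ℕ → Set E} {h : ℕ}

theorem exists_encloses_of_lt_of_le (hE : 1 < Module.rank ℝ E)
    (hcompact : ∀ j < h, IsCompact (C j)) (hconn : ∀ j < h, IsPathConnected (C j))
    (hdisj : ∀ j, j + 1 < h → Disjoint (C j) (C (j + 1)))
    (hmid : ∀ j, j + 2 < h → C j ⊆ exterior (C (j + 1)) → ¬ C (j + 2) ⊆ exterior (C (j + 1))) :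
    ∃ m, (∀ j < m, j + 1 < h → Encloses (C (j + 1)) (C j)) ∧
      ∀ j > m, j + 1 < h → Encloses (C j) (C (j + 1)) := by
  let P (j : ℕ) : Prop := j + 1 < h → ¬ Encloses (C (j + 1)) (C j)
  have encloses_of_not (j : ℕ) (hP : P j) (hj : j + 2 < h) : Encloses (C (j + 1)) (C (j + 2)) := by
    refine encloses_of_disjoint_exterior hE (hcompact _ (by lia)) (hconn _ (by lia))
      (hcompact _ hj).isClosed (hdisj _ hj) ?_
    refine (subset_exterior_or_disjoint_exterior (hconn _ hj) (hdisj _ hj)).resolve_left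
      (hmid j hj ?_)
    refine (subset_exterior_or_disjoint_exterior (hconn _ (by lia))
      (hdisj j (by lia)).symm).resolve_right fun hd ↦ hP (by lia) ?_
    exact encloses_of_disjoint_exterior hE (hcompact _ (by lia)) (hconn _ (by lia))
      (hcompact _ (by lia)).isClosed (hdisj j (by lia)).symm hd
  have P_succ (j : ℕ) (hP : P j) : P (j + 1) := fun hj henc ↦ by
    obtain ⟨p, hp⟩ := (hconn _ hj).nonempty
    exact disjoint_left.1 (encloses_of_not j hP hj).1 (henc.2 hp) hp
  classical
  have hex : ∃ j, P j := ⟨h, fun hh ↦ by lia⟩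
  refine ⟨Nat.find hex, fun j hj _ ↦ ?_, fun j hj hj' ↦ ?_⟩
  · exact not_not.1 fun henc ↦ Nat.find_min hex hj fun _ ↦ henc
  · obtain ⟨j, rfl⟩ := Nat.exists_eq_add_one_of_ne_zero (Nat.ne_zero_of_lt hj)
    exact encloses_of_not j
      (Nat.le_induction (Nat.find_spec hex) (fun l _ ↦ P_succ l) j (Nat.lt_succ_iff.1 hj)) hj'

theorem exists_disjoint_of_le_or_lt (hE : 1 < Module.rank ℝ E)
    (hcompact : ∀ j < h, IsCompact (C j)) (hconn : ∀ j < h, IsPathConnected (C j))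
    (hdisj : ∀ j, j + 1 < h → Disjoint (C j) (C (j + 1)))
    (hmid : ∀ j, j + 2 < h → C j ⊆ exterior (C (j + 1)) → ¬ C (j + 2) ⊆ exterior (C (j + 1))) :
    ∃ m, ∀ i j, i < j → j < h → j ≤ m ∨ m < i → Disjoint (C i) (C j) := by
  have : Nontrivial E := (rank_pos_iff_nontrivial (R := ℝ)).1 (zero_lt_one.trans hE)
  obtain ⟨m, hlt, hge⟩ := exists_encloses_of_lt_of_le hE hcompact hconn hdisj hmid
  refine ⟨m, fun i j hij hjh hm ↦ ?_⟩
  rcases hm with hjm | hmi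
  · have hji : Relation.TransGen (C ⁻¹'o Encloses) j i := transGen_of_succ_of_gt _
      (fun l hl ↦ hlt l (hl.2.trans_le hjm) ((Nat.succ_le_of_lt hl.2).trans_lt hjh)) hij
    rw [Relation.transGen_eq_self] at hji
    exact (Encloses.disjoint hji).symm
  · have hij : Relation.TransGen (C ⁻¹'o Encloses) i j := transGen_of_succ_of_lt _
      (fun l hl ↦ hge l (hmi.trans_le hl.1) ((Nat.succ_le_of_lt hl.2).trans_lt hjh)) hij
    rw [Relation.transGen_eq_self] at hij
    exact Encloses.disjoint hij

end Sequence
end NormedSpace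
end Exterior

section Trace

variable {n : ℕ} {G : SimpleGraph (Fin n)} {S X Y : Set (Fin n)} {P : Set Pt} {D : RawDrawing n}

theorem IsArcFrom.arcBody_eq {γ : ℝ → Pt} {a b : Pt} (h : IsArcFrom γ a b) :
    arcBody γ = {a, b} ∪ arcInterior γ := by
  obtain ⟨-, -, rfl, rfl⟩ := h
  rw [arcBody, arcInterior, ← image_pair, ← image_union, union_comm,
    Ioo_union_both zero_le_one]

theorem IsArcFrom.isPathConnected_arcBody {γ : ℝ → Pt} {a b : Pt} (h : IsArcFrom γ a b) :
    IsPathConnected (arcBody γ) :=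
  ((convex_Icc 0 1).isPathConnected ⟨0, by simp⟩).image' h.1

/-- The point set occupied in the drawing `D` by the subgraph of `G` induced by `X`. -/
def RawDrawing.trace (D : RawDrawing n) (G : SimpleGraph (Fin n)) (X : Set (Fin n)) : Set Pt :=
  D.pos '' X ∪ {p | ∃ u ∈ X, ∃ v ∈ X, G.Adj u v ∧ p ∈ arcInterior (D.curve u v)}

theorem RawDrawing.pos_mem_trace {v : Fin n} (hv : v ∈ X) : D.pos v ∈ D.trace G X :=
  .inl (mem_image_of_mem _ hv)

theorem RawDrawing.trace_mono (h : X ⊆ Y) : D.trace G X ⊆ D.trace G Y :=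
  union_subset_union (image_mono h) fun _ ⟨u, hu, v, hv, hp⟩ ↦ ⟨u, h hu, v, h hv, hp⟩

namespace IsPlanarDrawingOn

theorem disjoint_trace (hD : IsPlanarDrawingOn n G S P D) (hX : X ⊆ S) (hY : Y ⊆ S)
    (h : Disjoint X Y) : Disjoint (D.trace G X) (D.trace G Y) := by
  rw [disjoint_left]
  rintro p (⟨u, hu, rfl⟩ | ⟨u, hu, v, hv, huv, hp⟩) (⟨w, hw, heq⟩ | ⟨w, hw, z, hz, hwz, hp'⟩)
  · exact h.ne_of_mem hu hw (hD.pos_inj (hY hw) (hX hu) heq).symm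
  · exact hD.vertex_off_arc w (hY hw) z (hY hz) hwz u (hX hu) hp'
  · exact hD.vertex_off_arc u (hX hu) v (hX hv) huv w (hY hw) (heq ▸ hp)
  · refine (hD.no_cross u (hX hu) v (hX hv) w (hY hw) z (hY hz) huv hwz fun heq ↦ ?_).subset
      ⟨hp, hp'⟩
    have hu' : u ∈ s(w, z) := heq ▸ Sym2.mem_mk_left u v
    rcases Sym2.mem_iff.1 hu' with rfl | rfl
    exacts [h.ne_of_mem hu hw rfl, h.ne_of_mem hu hz rfl]

theorem arcBody_subset_trace (hD : IsPlanarDrawingOn n G S P D) (hX : X ⊆ S) {u v : Fin n}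
    (hu : u ∈ X) (hv : v ∈ X) (huv : G.Adj u v) : arcBody (D.curve u v) ⊆ D.trace G X := by
  rw [(hD.arc u (hX hu) v (hX hv) huv).arcBody_eq]
  refine union_subset (insert_subset ?_ (singleton_subset_iff.2 ?_)) fun p hp ↦
    .inr ⟨u, hu, v, hv, huv, hp⟩
  exacts [RawDrawing.pos_mem_trace hu, RawDrawing.pos_mem_trace hv]

theorem isCompact_trace (hD : IsPlanarDrawingOn n G S P D) (hX : X ⊆ S) :
    IsCompact (D.trace G X) := by
  let edges : Set (Fin n × Fin n) := {e | e.1 ∈ X ∧ e.2 ∈ X ∧ G.Adj e.1 e.2}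
  have htrace : D.trace G X = D.pos '' X ∪ ⋃ e ∈ edges, arcBody (D.curve e.1 e.2) := by
    refine (union_subset_union_right _ ?_).antisymm (union_subset subset_union_left ?_)
    · rintro p ⟨u, hu, v, hv, huv, hp⟩
      exact mem_biUnion (x := (u, v)) ⟨hu, hv, huv⟩ (image_mono Ioo_subset_Icc_self hp)
    · exact iUnion₂_subset fun e he ↦ hD.arcBody_subset_trace hX he.1 he.2.1 he.2.2
  rw [htrace]
  refine (X.toFinite.image _).isCompact.union (edges.toFinite.isCompact_biUnion fun e he ↦ ?_)
  exact isCompact_Icc.image_of_continuousOn (hD.arc _ (hX he.1) _ (hX he.2.1) he.2.2).1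

theorem joinedIn_trace_of_adj (hD : IsPlanarDrawingOn n G S P D) (hX : X ⊆ S) {u v : Fin n}
    (hu : u ∈ X) (hv : v ∈ X) (huv : G.Adj u v) :
    JoinedIn (D.trace G X) (D.pos u) (D.pos v) := by
  have harc := hD.arc u (hX hu) v (hX hv) huv
  refine (harc.isPathConnected_arcBody.joinedIn _ ?_ _ ?_).mono
    (hD.arcBody_subset_trace hX hu hv huv) <;> simp [harc.arcBody_eq]

theorem joinedIn_trace (hD : IsPlanarDrawingOn n G S P D) (hX : X ⊆ S)
    (hconn : (G.induce X).Preconnected) (u v : X) :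
    JoinedIn (D.trace G X) (D.pos u) (D.pos v) := by
  have hreach := (SimpleGraph.reachable_iff_reflTransGen u v).1 (hconn u v)
  induction hreach with
  | refl => exact .refl (RawDrawing.pos_mem_trace u.2)
  | @tail w z _ hwz ih => exact ih.trans (hD.joinedIn_trace_of_adj hX w.2 z.2 hwz)

theorem isPathConnected_trace (hD : IsPlanarDrawingOn n G S P D) (hX : X ⊆ S)
    (hne : X.Nonempty) (hconn : (G.induce X).Preconnected) :
    IsPathConnected (D.trace G X) := by
  obtain ⟨w, hw⟩ := hne
  refine ⟨D.pos w, RawDrawing.pos_mem_trace hw, fun {p} hp ↦ ?_⟩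
  rcases hp with ⟨v, hv, rfl⟩ | ⟨u, hu, v, hv, huv, hp⟩
  · exact hD.joinedIn_trace hX hconn ⟨w, hw⟩ ⟨v, hv⟩
  · have harc := hD.arc u (hX hu) v (hX hv) huv
    have hup : JoinedIn (arcBody (D.curve u v)) (D.pos u) p :=
      harc.isPathConnected_arcBody.joinedIn _ (by simp [harc.arcBody_eq]) _
        (image_mono Ioo_subset_Icc_self hp)
    exact (hD.joinedIn_trace hX hconn ⟨w, hw⟩ ⟨u, hu⟩).trans
      (hup.mono (hD.arcBody_subset_trace hX hu hv huv))

/-- Contracting `A` and `B` gives `K₅` minus the edge `ab`, whose only plane embedding separates `a`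
from `b` by the triangle. -/
theorem not_joinedIn_compl_trace_range (hD : IsPlanarDrawingOn n G S P D) {A B : Set (Fin n)}
    {x : Fin 3 → Fin n} (hA : A ⊆ S) (hB : B ⊆ S) (hx : range x ⊆ S)
    (hAB : Disjoint A B) (hAx : Disjoint A (range x)) (hBx : Disjoint B (range x))
    (hAconn : (G.induce A).Preconnected) (hBconn : (G.induce B).Preconnected)
    (hadj : ∀ i j, i ≠ j → G.Adj (x i) (x j)) (hadjA : ∀ i, ∃ u ∈ A, G.Adj u (x i))
    (hadjB : ∀ i, ∃ v ∈ B, G.Adj (x i) v) {a b : Fin n} (ha : a ∈ A) (hb : b ∈ B) :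
    ¬ JoinedIn (D.trace G (range x))ᶜ (D.pos a) (D.pos b) := by
  have hxS (i : Fin 3) : x i ∈ S := hx (mem_range_self i)
  have hxA (i : Fin 3) : x i ∉ A := fun h ↦ disjoint_left.1 hAx h (mem_range_self i)
  have hxB (i : Fin 3) : x i ∉ B := fun h ↦ disjoint_left.1 hBx h (mem_range_self i)
  have hxx (i j : Fin 3) (h : i ≠ j) : x i ≠ x j := (hadj i j h).ne
  have hSA (i : Fin 3) : insert (x i) A ⊆ S := insert_subset (hxS i) hA
  have hSB (i : Fin 3) : insert (x i) B ⊆ S := insert_subset (hxS i) hB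
  have hSE (i : Fin 3) : {x i, x (i + 1)} ⊆ S :=
    insert_subset (hxS i) (singleton_subset_iff.2 (hxS _))
  refine mt (JoinedIn.mono · (compl_subset_compl.2 (iUnion_subset fun i ↦
    RawDrawing.trace_mono (X := {x i, x (i + 1)}) ?_))) <|
    not_joinedIn_compl_iUnion Complex.equivRealProdCLM.toHomeomorph.symm
      (x := D.pos ∘ x) (S := fun i ↦ D.trace G (insert (x i) A))
      (T := fun i ↦ D.trace G (insert (x i) B)) ?_ ?_ ?_ ?_ ?_ ?_
  · rintro _ (rfl | rfl) <;> exact mem_range_self _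
  · intro i
    obtain ⟨u, hu, hux⟩ := hadjA i
    exact ((hD.joinedIn_trace hA hAconn ⟨a, ha⟩ ⟨u, hu⟩).mono
      (RawDrawing.trace_mono (subset_insert _ _))).trans
      (hD.joinedIn_trace_of_adj (hSA i) (.inr hu) (.inl rfl) hux)
  · intro i
    obtain ⟨v, hv, hxv⟩ := hadjB i
    exact (hD.joinedIn_trace_of_adj (hSB i) (.inl rfl) (.inr hv) hxv).trans
      ((hD.joinedIn_trace hB hBconn ⟨v, hv⟩ ⟨b, hb⟩).mono
        (RawDrawing.trace_mono (subset_insert _ _)))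
  · intro i
    exact hD.joinedIn_trace_of_adj (hSE i) (.inl rfl) (.inr rfl) (hadj i _ (by decide +revert))
  · intro i j hij
    refine hD.disjoint_trace (hSA i) (hSB j) ?_
    simp [hAB, hxA, hxB, hxx j i hij.symm]
  · intro i j hij hij'
    refine hD.disjoint_trace (hSA i) (hSE j) ?_
    simp [hxA, hxx, hij, hij', Ne.symm]
  · intro i j hij hij'
    refine hD.disjoint_trace (hSB i) (hSE j) ?_
    simp [hxB, hxx, hij, hij', Ne.symm]

end IsPlanarDrawingOn

end Trace

theorem card_le_two_mul_card_of_injOn {α β : Type*} [Fintype α] {f : α → β} {t : Finset β}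
    (s : Set α) (hf : ∀ a, f a ∈ t) (hs : InjOn f s) (hs' : InjOn f sᶜ) :
    Fintype.card α ≤ 2 * t.card := by
  classical
  calc Fintype.card α
      = (Finset.univ.filter (· ∈ s)).card + (Finset.univ.filter (· ∉ s)).card :=
        (Finset.card_filter_add_card_filter_not _).symm
    _ ≤ t.card + t.card := by
        gcongr
        · exact Finset.card_le_card_of_injOn f (fun a _ ↦ hf a) (hs.mono fun a ↦ by simp)
        · exact Finset.card_le_card_of_injOn f (fun a _ ↦ hf a) (hs'.mono fun a ↦ by simp)
    _ = 2 * t.card := (two_mul _).symm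

theorem IsPlanarDrawingOn.congr {n : ℕ} {G : SimpleGraph (Fin n)} {S : Set (Fin n)} {P : Set Pt}
    {D D' : RawDrawing n} (hD : IsPlanarDrawingOn n G S P D)
    (hsymm : ∀ u v, D'.curve v u = fun t ↦ D'.curve u v (1 - t)) (hpos : EqOn D'.pos D.pos S)
    (hcurve : ∀ u ∈ S, ∀ v ∈ S, G.Adj u v → D'.curve u v = D.curve u v) :
    IsPlanarDrawingOn n G S P D' where
  pos_mem v hv := hpos hv ▸ hD.pos_mem v hv
  pos_inj := hD.pos_inj.congr hpos.symm
  curve_symm := hsymm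
  arc u hu v hv huv := by
    rw [hcurve u hu v hv huv, hpos hu, hpos hv]
    exact hD.arc u hu v hv huv
  vertex_off_arc u hu v hv huv w hw := by
    rw [hcurve u hu v hv huv, hpos hw]
    exact hD.vertex_off_arc u hu v hv huv w hw
  no_cross u hu v hv x hx y hy huv hxy hne := by
    rw [hcurve u hu v hv huv, hcurve x hx y hy hxy]
    exact hD.no_cross u hu v hv x hx y hy huv hxy hne

namespace Realization

variable {n ω : ℕ} {G : SimpleGraph (Fin n)} {P : Set Pt} {i j : ℕ} {u v : Fin n}

theorem pos_eq_of_le (R : Realization n ω G P) (hij : i ≤ j) (hj : j ≤ n)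
    (hvi : v ∈ window n ω i) (hvj : v ∈ window n ω j) : (R.Γ j).pos v = (R.Γ i).pos v := by
  induction j, hij using Nat.le_induction with
  | base => rfl
  | succ j hij ih =>
    have hv : v ∈ window n ω j := ⟨hvi.1.trans hij, j.le_succ.trans hvj.2⟩
    exact (R.pos_eq (j + 1) (by have := hv.1; lia) hj v ⟨hv, hvj⟩).trans (ih (by lia) hv)

theorem curve_eq_of_le (R : Realization n ω G P) (huv : G.Adj u v) (hij : i ≤ j) (hj : j ≤ n)
    (hui : u ∈ window n ω i) (hvi : v ∈ window n ω i) (huj : u ∈ window n ω j)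
    (hvj : v ∈ window n ω j) : (R.Γ j).curve u v = (R.Γ i).curve u v := by
  induction j, hij using Nat.le_induction with
  | base => rfl
  | succ j hij ih =>
    have hu : u ∈ window n ω j := ⟨hui.1.trans hij, j.le_succ.trans huj.2⟩
    have hv : v ∈ window n ω j := ⟨hvi.1.trans hij, j.le_succ.trans hvj.2⟩
    exact (R.curve_eq (j + 1) (by have := hv.1; lia) hj u ⟨hu, huj⟩ v ⟨hv, hvj⟩ huv).trans
      (ih (by lia) hu hv)

/-- All the drawings of a realization superimposed: each vertex and each edge is taken from the
first drawing in which it can be visible, the vertex `v` being the `(v + 1)`-st in the ordering.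
The drawing may be nonplanar as a whole. -/
def overlay (R : Realization n ω G P) : RawDrawing n where
  pos v := (R.Γ (v + 1)).pos v
  curve u v := (R.Γ (max u.val v.val + 1)).curve u v

theorem isPlanarDrawingOn_overlay (R : Realization n ω G P) (hi : 1 ≤ i) (hin : i ≤ n) :
    IsPlanarDrawingOn n G (window n ω i) P R.overlay := by
  refine (R.planar i hi hin).congr (fun u v ↦ ?_) (fun v hv ↦ ?_) fun u hu v hv huv ↦ ?_
  · simpa only [overlay, max_comm] using
      (R.planar (max u.val v.val + 1) (by lia) (by lia)).curve_symm u v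
  · obtain ⟨hv₁, hv₂⟩ := hv
    exact (R.pos_eq_of_le hv₁ hin ⟨le_rfl, by lia⟩ ⟨hv₁, hv₂⟩).symm
  · obtain ⟨hu₁, hu₂⟩ := hu
    obtain ⟨hv₁, hv₂⟩ := hv
    exact (R.curve_eq_of_le huv (by lia) hin ⟨by lia, by lia⟩ ⟨by lia, by lia⟩ ⟨hu₁, hu₂⟩
      ⟨hv₁, hv₂⟩).symm

theorem pos_overlay_mem (R : Realization n ω G P) (hω : 1 ≤ ω) (v : Fin n) : R.overlay.pos v ∈ P :=
  (R.planar (v + 1) (by lia) v.2).pos_mem v ⟨le_rfl, by lia⟩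

end Realization

section NestedTriangles

/-- The vertices of the `m`-th triangle of the nested triangles graph, counted from `0`. -/
def layer (h m : ℕ) : Set (Fin (3 * h)) := {v | v.val / 3 = m}

variable {h ω i l m : ℕ} {P : Set Pt}

theorem nestedTriangles_adj {u v : Fin (3 * h)} : (nestedTriangles h).Adj u v ↔
    u ≠ v ∧ (u.val / 3 = v.val / 3 ∨ u.val + 3 = v.val ∨ v.val + 3 = u.val) := by
  rw [nestedTriangles, SimpleGraph.fromRel_adj]
  lia

theorem layer_nonempty (hm : m < h) : (layer h m).Nonempty :=
  ⟨⟨3 * m, by lia⟩, by simp [layer]⟩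

theorem disjoint_layer (hlm : l ≠ m) : Disjoint (layer h l) (layer h m) :=
  disjoint_left.2 fun _ hl hm ↦ hlm (hl.symm.trans hm)

theorem layer_subset_window (hi : 3 * m + 3 ≤ i) (hi' : i ≤ 3 * m + ω) :
    layer h m ⊆ window (3 * h) ω i := by
  rintro v rfl
  exact ⟨by lia, by lia⟩

theorem preconnected_induce_layer : ((nestedTriangles h).induce (layer h m)).Preconnected := by
  rw [SimpleGraph.induce_eq_top.2 fun u hu v hv huv ↦
    nestedTriangles_adj.2 ⟨huv, .inl (hu.trans hv.symm)⟩]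
  exact SimpleGraph.preconnected_top

/-- The `k`-th vertex of the `m`-th triangle. -/
def layerVertex (hm : m < h) (k : Fin 3) : Fin (3 * h) := ⟨3 * m + k, by lia⟩

theorem range_layerVertex (hm : m < h) : range (layerVertex hm) = layer h m := by
  ext v
  constructor
  · rintro ⟨k, rfl⟩
    change (3 * m + k.val) / 3 = m
    lia
  · rintro rfl
    exact ⟨⟨v.val % 3, by lia⟩, Fin.ext (Nat.div_add_mod v.val 3)⟩

theorem layerVertex_mem_layer (hm : m < h) (k : Fin 3) : layerVertex hm k ∈ layer h m :=
  range_layerVertex hm ▸ mem_range_self k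

theorem adj_layerVertex (hm : m < h) {k l : Fin 3} (hkl : k ≠ l) :
    (nestedTriangles h).Adj (layerVertex hm k) (layerVertex hm l) := by
  refine nestedTriangles_adj.2 ⟨fun h ↦ hkl (Fin.ext ?_),
    .inl ((layerVertex_mem_layer hm k).trans (layerVertex_mem_layer hm l).symm)⟩
  simpa [layerVertex] using h

theorem adj_layerVertex_succ (hm : m + 1 < h) (k : Fin 3) :
    (nestedTriangles h).Adj (layerVertex (m.lt_succ_self.trans hm) k) (layerVertex hm k) := by
  rw [nestedTriangles_adj, Ne, Fin.ext_iff]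
  simp only [layerVertex]
  lia

theorem IsPlanarDrawingOn.not_joinedIn_compl_trace_layer {S : Set (Fin (3 * h))}
    {D : RawDrawing (3 * h)} (hD : IsPlanarDrawingOn (3 * h) (nestedTriangles h) S P D)
    (hm : m + 2 < h) (hS : layer h m ∪ layer h (m + 1) ∪ layer h (m + 2) ⊆ S) {a b : Fin (3 * h)}
    (ha : a ∈ layer h m) (hb : b ∈ layer h (m + 2)) :
    ¬ JoinedIn (D.trace (nestedTriangles h) (layer h (m + 1)))ᶜ (D.pos a) (D.pos b) := by
  obtain ⟨⟨hS₀, hS₁⟩, hS₂⟩ := by simpa only [union_subset_iff] using hS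
  have hm₁ : m + 1 < h := by lia
  rw [← range_layerVertex hm₁] at hS₁ ⊢
  refine hD.not_joinedIn_compl_trace_range hS₀ hS₂ hS₁ (disjoint_layer (by lia)) ?_ ?_
    preconnected_induce_layer preconnected_induce_layer (fun k l ↦ adj_layerVertex hm₁)
    (fun k ↦ ⟨_, layerVertex_mem_layer _ k, adj_layerVertex_succ hm₁ k⟩)
    (fun k ↦ ⟨_, layerVertex_mem_layer _ k, adj_layerVertex_succ hm k⟩) ha hb
  all_goals exact range_layerVertex hm₁ ▸ disjoint_layer (by lia)

namespace Realization

variable (R : Realization (3 * h) ω (nestedTriangles h) P)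

theorem exists_disjoint_trace_layer (hω : 9 ≤ ω) :
    ∃ m, ∀ i j, i < j → j < h → j ≤ m ∨ m < i →
      Disjoint (R.overlay.trace (nestedTriangles h) (layer h i))
        (R.overlay.trace (nestedTriangles h) (layer h j)) := by
  have hrank : 1 < Module.rank ℝ Pt := by
    rw [rank_prod', Module.rank_self]
    norm_num
  refine exists_disjoint_of_le_or_lt hrank (fun j hj ↦ ?_) (fun j hj ↦ ?_) (fun j hj ↦ ?_)
    fun j hj hin hout ↦ ?_
  · have hD := R.isPlanarDrawingOn_overlay (i := 3 * j + 3) (by lia) (by lia)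
    exact hD.isCompact_trace (layer_subset_window le_rfl (by lia))
  · have hD := R.isPlanarDrawingOn_overlay (i := 3 * j + 3) (by lia) (by lia)
    exact hD.isPathConnected_trace (layer_subset_window le_rfl (by lia)) (layer_nonempty hj)
      preconnected_induce_layer
  · have hD := R.isPlanarDrawingOn_overlay (i := 3 * j + 6) (by lia) (by lia)
    exact hD.disjoint_trace (layer_subset_window (by lia) (by lia))
      (layer_subset_window (by lia) (by lia)) (disjoint_layer (by lia))
  · have hD := R.isPlanarDrawingOn_overlay (i := 3 * j + 9) (by lia) (by lia)
    obtain ⟨a, ha⟩ := layer_nonempty (show j < h by lia)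
    obtain ⟨b, hb⟩ := layer_nonempty hj
    refine hD.not_joinedIn_compl_trace_layer hj (union_subset (union_subset ?_ ?_) ?_) ha hb
      (joinedIn_of_mem_exterior (hin (RawDrawing.pos_mem_trace ha))
        (hout (RawDrawing.pos_mem_trace hb)))
    all_goals exact layer_subset_window (by lia) (by lia)

theorem injOn_pos_overlay (hω : 3 ≤ ω) {J : Set ℕ}
    (hJ : ∀ i ∈ J, ∀ j ∈ J, i < j → j < h →
      Disjoint (R.overlay.trace (nestedTriangles h) (layer h i))
        (R.overlay.trace (nestedTriangles h) (layer h j))) :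
    InjOn R.overlay.pos {v | v.val / 3 ∈ J} := by
  intro u hu v hv huv
  rcases lt_trichotomy (u.val / 3) (v.val / 3) with hlt | heq | hgt
  · exact ((hJ _ hu _ hv hlt (by lia)).ne_of_mem (RawDrawing.pos_mem_trace rfl)
      (RawDrawing.pos_mem_trace rfl) huv).elim
  · have hD := R.isPlanarDrawingOn_overlay (i := 3 * (v.val / 3) + 3) (by lia) (by lia)
    have hwindow := layer_subset_window (h := h) le_rfl (Nat.add_le_add_left hω (3 * (v.val / 3)))
    exact hD.pos_inj (hwindow heq) (hwindow rfl) huv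
  · exact ((hJ _ hv _ hu hgt (by lia)).ne_of_mem (RawDrawing.pos_mem_trace rfl)
      (RawDrawing.pos_mem_trace rfl) huv.symm).elim

end Realization

end NestedTriangles

theorem nested_triangles_needs_linearly_many_extra_points_general {h ω k : ℕ} (hω : 9 ≤ ω)
    (hS : Realizable (3 * h) ω k (nestedTriangles h)) : 3 * h ≤ 2 * (ω + k) := by
  obtain ⟨P, hcard, ⟨R⟩⟩ := hS
  obtain ⟨m, hm⟩ := R.exists_disjoint_trace_layer hω
  have hinner : InjOn R.overlay.pos {v | v.val / 3 ≤ m} :=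
    R.injOn_pos_overlay (J := Iic m) (by lia) fun i _ j hj hij hjh ↦ hm i j hij hjh (.inl hj)
  have houter : InjOn R.overlay.pos {v | m < v.val / 3} :=
    R.injOn_pos_overlay (J := Ioi m) (by lia) fun i hi j _ hij hjh ↦ hm i j hij hjh (.inr hi)
  have hle := card_le_two_mul_card_of_injOn {v | v.val / 3 ≤ m} (R.pos_overlay_mem (by lia)) hinner
    (by simpa only [compl_ofPred, not_le] using houter)
  rwa [Fintype.card_fin, hcard] at hle

/-- **Theorem 8.** Let `S = (G, 9, k, τ)` be a realizable graph
story where `G` is the nested triangles graph on `n = 3h` vertices and `τ` is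
given by the indices of the vertices.  Then `k ∈ Ω(n)`: there is a constant
`c > 0` such that `n ≤ c * (k + 1)` whenever such a story is realizable. -/
theorem nested_triangles_needs_linearly_many_extra_points :
    ∃ c : ℕ, 0 < c ∧
      ∀ h k : ℕ, 3 ≤ h →
        Realizable (3 * h) 9 k (nestedTriangles h) → 3 * h ≤ c * (k + 1) := by
  refine ⟨18, by norm_num, fun h k _ hS ↦ ?_⟩
  have hle := nested_triangles_needs_linearly_many_extra_points_general le_rfl hS
  lia

end GraphStories
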